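/- arXiv:math/9607229 — 11 statements merged into one kernel-verified Lean document; each statement's English description precedes it below -/
import Mathlib

section
/- Let M be a meet-semilattice, m, n natural numbers, and f : (Fin m → M) → (Fin n → M) → M a function satisfying f (fun i => a i ⊓ b i) (fun j => c j ⊓ d j) = f a c ⊓ f b d for all a, b : Fin m → M and c, d : Fin n → M. Let 1 ∈ M be maximal. If f a c = 1 and f b d = 1, then f a d = 1 and f b c = 1. -/
section Rectangulation

variable {α β γ F : Type*} [SemilatticeInf α] [SemilatticeInf β] [SemilatticeInf γ]

theorem inf_eq_iff_of_isMax {e x y : γ} (he : IsMax e) : x ⊓ y = e ↔ x = e ∧ y = e := by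
  constructor
  · rintro rfl
    exact ⟨(he.eq_of_le inf_le_left).symm, (he.eq_of_le inf_le_right).symm⟩
  · rintro ⟨rfl, rfl⟩
    exact inf_idem _

variable [FunLike F (α × β) γ] [InfHomClass F (α × β) γ]

theorem map_mk_inf_map_mk_swap (f : F) (a b : α) (c d : β) :
    f (a, d) ⊓ f (b, c) = f (a, c) ⊓ f (b, d) := by
  simp only [← map_inf, Prod.mk_inf_mk, inf_comm d c]

theorem stmt_0_general (f : F) {e : γ} (he : IsMax e) (a b : α) (c d : β) :
    f (a, c) = e ∧ f (b, d) = e ↔ f (a, d) = e ∧ f (b, c) = e := by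
  rw [← inf_eq_iff_of_isMax he, ← inf_eq_iff_of_isMax he, map_mk_inf_map_mk_swap]

end Rectangulation

/-- An operation compatible with a meet-semilattice operation rectangulates
at a maximal element (core of Theorem 2.8 (ii)⇒(i)). -/
theorem stmt_0 {M : Type*} [SemilatticeInf M] {m n : ℕ}
    (f : (Fin m → M) → (Fin n → M) → M)
    (hf : ∀ (a b : Fin m → M) (c d : Fin n → M),
      f (fun i => a i ⊓ b i) (fun j => c j ⊓ d j) = f a c ⊓ f b d)
    (one : M) (hone : ∀ u : M, one ≤ u → u = one)
    (a b : Fin m → M) (c d : Fin n → M)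
    (hac : f a c = one) (hbd : f b d = one) :
    f a d = one ∧ f b c = one := by
  let g : InfHom ((Fin m → M) × (Fin n → M)) M :=
    ⟨fun p ↦ f p.1 p.2, fun p q ↦ hf p.1 q.1 p.2 q.2⟩
  exact (stmt_0_general g (fun u hu ↦ (hone u hu).le) a b c d).1 ⟨hac, hbd⟩
end

section
/- Let L be a first-order language and M an L-structure carrying a SemilatticeInf instance such that ⊓ is a compatible semilattice operation of M. Let 1 ∈ M be maximal. Then for every L-term t whose variables are indexed by (Fin m ⊕ Fin n) ⊕ Fin k, every parameter tuple w : Fin k → M, and all tuples a, b : Fin m → M and c, d : Fin n → M: if t.realize (Sum.elim (Sum.elim a c) w) = 1 and t.realize (Sum.elim (Sum.elim b d) w) = 1, then t.realize (Sum.elim (Sum.elim a d) w) = 1 and t.realize (Sum.elim (Sum.elim b c) w) = 1. -/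
open FirstOrder Language Structure

/-!
Since `⊓` is idempotent, it commutes not only with terms but also with polynomial operations, so
these are `⊓`-homomorphisms and in particular monotone. If such an operation `f` takes the maximal
value `p` at `(a, c)` and `(b, d)`, then `p = f (a ⊓ b, c ⊓ d)`, and both `(a, d)` and `(b, c)` lie
above `(a ⊓ b, c ⊓ d)`.
-/

/-- A binary operation `f` rectangulates at `p` if its fibre over `p` is a rectangle. An operation
of higher arity is treated as binary by splitting its variables into two blocks. -/
def RectangulatesAt {A B C : Type*} (f : A × B → C) (p : C) : Prop :=
  ∀ ⦃a b : A⦄ ⦃c d : B⦄, f (a, c) = p → f (b, d) = p → f (a, d) = p ∧ f (b, c) = p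

section InfHom

variable {F A B C : Type*} [SemilatticeInf C] {p : C}

theorem map_eq_of_isMax_of_inf_le [SemilatticeInf A] [FunLike F A C] [InfHomClass F A C]
    (f : F) (hp : IsMax p) {u v x : A} (hu : f u = p) (hv : f v = p) (hx : u ⊓ v ≤ x) :
    f x = p := by
  have hinf : f (u ⊓ v) = p := by rw [map_inf, hu, hv, inf_idem]
  exact (hp.eq_of_le (hinf ▸ OrderHomClass.mono f hx)).symm

theorem rectangulatesAt_of_isMax [SemilatticeInf A] [SemilatticeInf B] [FunLike F (A × B) C]
    [InfHomClass F (A × B) C] (f : F) (hp : IsMax p) : RectangulatesAt f p :=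
  fun _ _ _ _ hac hbd ↦
    ⟨map_eq_of_isMax_of_inf_le f hp hac hbd ⟨inf_le_left, inf_le_right⟩,
      map_eq_of_isMax_of_inf_le f hp hac hbd ⟨inf_le_right, inf_le_left⟩⟩

end InfHom

/-- The meet is a compatible semilattice operation of the `L`-structure `M`: it commutes with
every basic operation. -/
def InfCompatible (L : Language) (M : Type*) [L.Structure M] [SemilatticeInf M] : Prop :=
  ∀ (n : ℕ) (g : L.Functions n) (a b : Fin n → M), funMap g (a ⊓ b) = funMap g a ⊓ funMap g b

namespace InfCompatible

variable {L : Language} {M α β γ : Type*} [L.Structure M] [SemilatticeInf M]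

theorem realize_inf (h : InfCompatible L M) (t : L.Term α) (u v : α → M) :
    t.realize (u ⊓ v) = t.realize u ⊓ t.realize v := by
  induction t with
  | var => rfl
  | func g ts ih =>
    simp only [Term.realize_func, ih]
    exact h _ g _ _

/-- The polynomial operation obtained from the term `t` by fixing the parameters `w`, as a
`⊓`-homomorphism in its two remaining blocks of variables. -/
def polynomialInfHom (h : InfCompatible L M) (t : L.Term ((α ⊕ β) ⊕ γ)) (w : γ → M) :
    InfHom ((α → M) × (β → M)) M where
  toFun x := t.realize (Sum.elim (Sum.elim x.1 x.2) w)
  map_inf' x y := by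
    rw [← h.realize_inf]
    congr 1
    ext ((_ | _) | _)
    exacts [rfl, rfl, (inf_idem _).symm]

end InfCompatible

theorem stmt_1_general {L : Language} {M α β γ : Type*} [L.Structure M] [SemilatticeInf M]
    (hcompat : InfCompatible L M) {p : M} (hp : IsMax p) (t : L.Term ((α ⊕ β) ⊕ γ)) (w : γ → M) :
    RectangulatesAt
      (fun x : (α → M) × (β → M) ↦ t.realize (Sum.elim (Sum.elim x.1 x.2) w)) p :=
  rectangulatesAt_of_isMax (hcompat.polynomialInfHom t w) hp

/-- All polynomial operations of a structure with a compatible semilattice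
operation rectangulate at a maximal element (Theorem 2.8 (ii)⇒(i)). -/
theorem stmt_1 {L : Language} {M : Type*} [L.Structure M] [SemilatticeInf M]
    (hcompat : ∀ (n : ℕ) (g : L.Functions n) (a b : Fin n → M),
      funMap g (fun i => a i ⊓ b i) = funMap g a ⊓ funMap g b)
    (one : M) (hone : ∀ u : M, one ≤ u → u = one)
    {m n k : ℕ} (t : L.Term ((Fin m ⊕ Fin n) ⊕ Fin k))
    (w : Fin k → M) (a b : Fin m → M) (c d : Fin n → M)
    (h1 : t.realize (Sum.elim (Sum.elim a c) w) = one)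
    (h2 : t.realize (Sum.elim (Sum.elim b d) w) = one) :
    t.realize (Sum.elim (Sum.elim a d) w) = one ∧
      t.realize (Sum.elim (Sum.elim b c) w) = one :=
  stmt_1_general hcompat (fun u hu ↦ (hone u hu).le) t w h1 h2
end

section
/- Let M be a meet-semilattice and p : M → M → M a binary operation that is idempotent (p a a = a), commutative (p a b = p b a), and compatible with ⊓ in the sense that p (a ⊓ b) (c ⊓ d) = p a c ⊓ p b d for all a, b, c, d. Then p a b = a ⊓ b for all a, b ∈ M. -/
theorem stmt_2_general {M : Type*} (p q : M → M → M)
    (hp_idem : ∀ a : M, p a a = a) (hp_comm : ∀ a b : M, p a b = p b a)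
    (hq_idem : ∀ a : M, q a a = a) (hq_comm : ∀ a b : M, q a b = q b a)
    (interchange : ∀ a b c d : M, p (q a b) (q c d) = q (p a c) (p b d)) (a b : M) :
    p a b = q a b :=
  calc
    p a b = q (p a b) (p b a) := by rw [hp_comm b a, hq_idem]
    _ = p (q a b) (q b a) := (interchange a b b a).symm
    _ = q a b := by rw [hq_comm b a, hp_idem]

/-- Lemma 2.5: every idempotent commutative binary operation compatible with
a compatible semilattice operation ⊓ coincides with ⊓. -/
theorem stmt_2 {M : Type*} [SemilatticeInf M] (p : M → M → M)
    (hidem : ∀ a : M, p a a = a)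
    (hcomm : ∀ a b : M, p a b = p b a)
    (hcompat : ∀ a b c d : M, p (a ⊓ b) (c ⊓ d) = p a c ⊓ p b d) :
    ∀ a b : M, p a b = a ⊓ b :=
  stmt_2_general p (· ⊓ ·) hidem hcomm inf_idem inf_comm hcompat
end

section
/- Let M be a type and p, q : M → M → M two semilattice operations on M (each idempotent, commutative, and associative). If p is compatible with q, i.e. q (p a c) (p b d) = p (q a b) (q c d) for all a, b, c, d ∈ M, then p = q. -/
theorem stmt_3_general {M : Type*} (p q : M → M → M)
    (hpi : ∀ a : M, p a a = a) (hpc : ∀ a b : M, p a b = p b a)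
    (hqi : ∀ a : M, q a a = a) (hqc : ∀ a b : M, q a b = q b a)
    (hcompat : ∀ a b c d : M, q (p a c) (p b d) = p (q a b) (q c d)) :
    p = q := by
  funext x y
  calc p x y = q (p x y) (p x y) := (hqi _).symm
    _ = q (p x y) (p y x) := by rw [hpc y x]
    _ = p (q x y) (q y x) := hcompat x y y x
    _ = p (q x y) (q x y) := by rw [hqc y x]
    _ = q x y := hpi _

/-- Corollary 2.6: an algebra has at most one compatible semilattice
operation. -/
theorem stmt_3 {M : Type*} (p q : M → M → M)
    (hpi : ∀ a : M, p a a = a) (hpc : ∀ a b : M, p a b = p b a)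
    (hpa : ∀ a b c : M, p (p a b) c = p a (p b c))
    (hqi : ∀ a : M, q a a = a) (hqc : ∀ a b : M, q a b = q b a)
    (hqa : ∀ a b c : M, q (q a b) c = q a (q b c))
    (hcompat : ∀ a b c d : M, q (p a c) (p b d) = p (q a b) (q c d)) :
    p = q :=
  stmt_3_general p q hpi hpc hqi hqc hcompat
end

section
/- Let L be a first-order language and M a finite nonempty L-structure that is idempotent and carries a SemilatticeInf instance with a top element ⊤ such that ⊓ is a compatible semilattice operation of M. Assume M contains no 2-element essentially unary subalgebra, i.e., for all u ≠ v in M such that the set {u, v} is closed under every funMap (for every n-ary function symbol g and every x : Fin n → M with x j ∈ {u, v} for all j, funMap g x ∈ {u, v}), there exist n and an L-term t : L.Term (Fin n) such that no index i satisfies: for all x : Fin n → M with x j ∈ {u, v} for all j, t.realize x = x i. Then there is an L-term s : L.Term (Fin 2) with s.realize ![x, y] = x ⊓ y for all x, y ∈ M. -/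
open FirstOrder Language Structure

/-!
Since the term operations preserve `⊓` and `⊤`, each one is a meet of unary maps,
`t x = ⨅ i, tᵢ (x i)`, and idempotency gives `z ≤ tᵢ z`. Let `h` be the least map such that
`x ⊓ h y` is a term operation. If `h = id` we are done. Otherwise take `u` maximal with `h u ≠ u`;
then `h u` is the least element above `u`. For every term `t` some `tᵢ` fixes `u`, because the meet
of the `tᵢ u` is `u`, and only one does: if `tᵢ` and `tⱼ` both fix `u`, then `t` yields a term
operation `x ⊓ k y` with `k u = u`, against `h ≤ k`. Hence `t` is the `i`-th projection on
`{u, h u}`, which is therefore an essentially unary subalgebra.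
-/

section Order

theorem exists_isLeast_Ioi_apply {P : Type*} [PartialOrder P] [WellFoundedGT P] {h : P → P}
    (hmono : Monotone h) (hle : ∀ x, x ≤ h x) (hne : h ≠ id) :
    ∃ u, IsLeast (Set.Ioi u) (h u) := by
  obtain ⟨u, hu⟩ := exists_maximal_of_wellFoundedGT (fun u => h u ≠ u) (Function.ne_iff.1 hne)
  refine ⟨u, (hle u).lt_of_ne' hu.prop, fun w (huw : u < w) => ?_⟩
  have hw : h w = w := by
    by_contra hw
    exact hu.not_gt hw huw
  exact (hmono huw.le).trans_eq hw

variable {α M : Type*}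

/-- The operation `F` restricts to the `i`-th projection on `s`. -/
def IsProjOn (F : (α → M) → M) (s : Set M) (i : α) : Prop :=
  ∀ x : α → M, (∀ j, x j ∈ s) → F x = x i

variable [SemilatticeInf M] [OrderTop M] [DecidableEq α]

/-- The `i`-th unary component `z ↦ F (⊤, …, z, …, ⊤)` of an operation `F`; an operation
preserving `⊓` and `⊤` is the meet of its components. -/
def coordMap (F : InfTopHom (α → M) M) (i : α) (z : M) : M :=
  F (Function.update ⊤ i z)

theorem le_update_top_apply (x : α → M) (i : α) : x ≤ Function.update ⊤ i (x i) :=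
  le_update_iff.2 ⟨le_rfl, fun _ _ => le_top⟩

theorem inf_univ_update_top [Fintype α] (x : α → M) :
    (Finset.univ.inf fun i => Function.update (⊤ : α → M) i (x i)) = x := by
  refine le_antisymm (fun j => ?_) (Finset.le_inf fun i _ => le_update_top_apply x i)
  simpa only [Function.update_self] using
    Finset.inf_le (f := fun i => Function.update (⊤ : α → M) i (x i)) (Finset.mem_univ j) j

variable (F : InfTopHom (α → M) M)

theorem coordMap_mono (i : α) : Monotone (coordMap F i) := fun _ _ hzw =>
  OrderHomClass.mono F (Function.update_mono hzw)

theorem map_le_coordMap (x : α → M) (i : α) : F x ≤ coordMap F i (x i) :=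
  OrderHomClass.mono F (le_update_top_apply x i)

theorem map_eq_inf_coordMap [Fintype α] (x : α → M) :
    F x = Finset.univ.inf fun i => coordMap F i (x i) := by
  conv_lhs => rw [← inf_univ_update_top x, map_finset_inf]
  rfl

variable {F}

theorem le_coordMap (hF : ∀ z, F (fun _ => z) = z) (i : α) (z : M) : z ≤ coordMap F i z :=
  (hF z).ge.trans (map_le_coordMap F _ i)

theorem le_coordMap_of_ne {u v : M} (hF : ∀ z, F (fun _ => z) = z) (huv : IsLeast (Set.Ioi u) v)
    {i : α} (hi : coordMap F i u ≠ u) : v ≤ coordMap F i u :=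
  huv.2 ((le_coordMap hF i u).lt_of_ne' hi)

theorem exists_coordMap_eq_self [Finite α] {u v : M} (hF : ∀ z, F (fun _ => z) = z)
    (huv : IsLeast (Set.Ioi u) v) : ∃ i, coordMap F i u = u := by
  cases nonempty_fintype α
  by_contra! hne
  have hvu : v ≤ u := calc
    v ≤ Finset.univ.inf fun i => coordMap F i u :=
      Finset.le_inf fun i _ => le_coordMap_of_ne hF huv (hne i)
    _ = F (fun _ => u) := (map_eq_inf_coordMap F _).symm
    _ = u := hF u
  exact hvu.not_gt huv.1

theorem isProjOn_pair_of_coordMap [Finite α] {u v : M} (hF : ∀ z, F (fun _ => z) = z)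
    (huv : IsLeast (Set.Ioi u) v) {i : α} (hi : coordMap F i u = u)
    (hne : ∀ j ≠ i, coordMap F j u ≠ u) : IsProjOn F {u, v} i := by
  cases nonempty_fintype α
  intro x hx
  have hu_le (j : α) : u ≤ x j := by
    rcases hx j with hj | hj
    exacts [hj.ge, huv.1.le.trans_eq hj.symm]
  have hle_v (j : α) : x j ≤ v := by
    rcases hx j with hj | hj
    exacts [hj.trans_le huv.1.le, hj.le]
  rcases hx i with hxi | hxi <;> rw [hxi]
  · refine le_antisymm ?_ ((hF u).ge.trans (OrderHomClass.mono F hu_le))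
    simpa only [hxi, hi] using map_le_coordMap F x i
  · refine le_antisymm ((OrderHomClass.mono F hle_v).trans (hF v).le) ?_
    rw [map_eq_inf_coordMap]
    refine Finset.le_inf fun j _ => ?_
    by_cases hj : j = i
    · rw [hj, hxi]
      exact le_coordMap hF i v
    · exact (le_coordMap_of_ne hF huv (hne j hj)).trans (coordMap_mono F j (hu_le j))

end Order

section Term

variable {L : Language} {M α : Type*} [L.Structure M]

theorem realize_subst_pair (t : L.Term (Fin 2)) (a b : L.Term α) (v : α → M) :
    (t.subst ![a, b]).realize v = t.realize ![a.realize v, b.realize v] := by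
  rw [Term.realize_subst]
  congr 1
  ext i
  fin_cases i <;> rfl

theorem funMap_mem_of_forall_isProjOn {n : ℕ} {s : Set M}
    (hs : ∀ t : L.Term (Fin n), ∃ i, IsProjOn (M := M) t.realize s i)
    (g : L.Functions n) {x : Fin n → M} (hx : ∀ j, x j ∈ s) : funMap g x ∈ s := by
  obtain ⟨i, hi⟩ := hs (Term.func g Term.var)
  have hgx : funMap g x = x i := hi x hx
  exact hgx ▸ hx i

/-- All basic operations of the algebra `M` are idempotent. -/
class IsIdempotentAlgebra (L : Language) (M : Type*) [L.Structure M] : Prop where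
  funMap_const : ∀ (n : ℕ) (g : L.Functions n) (a : M), funMap g (fun _ : Fin n => a) = a

/-- The meet of `M` is a compatible operation: it commutes with all basic operations. -/
class IsCompatibleInf (L : Language) (M : Type*) [L.Structure M] [SemilatticeInf M] : Prop where
  funMap_inf : ∀ (n : ℕ) (g : L.Functions n) (a b : Fin n → M),
    funMap g (fun i => a i ⊓ b i) = funMap g a ⊓ funMap g b

theorem realize_const [IsIdempotentAlgebra L M] (t : L.Term α) (a : M) :
    t.realize (fun _ => a) = a := by
  induction t with
  | var i => rfl
  | func g ts ih =>
    simp only [Term.realize_func, ih]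
    exact IsIdempotentAlgebra.funMap_const _ g a

variable [SemilatticeInf M]

theorem realize_inf [IsCompatibleInf L M] (t : L.Term α) (a b : α → M) :
    t.realize (a ⊓ b) = t.realize a ⊓ t.realize b := by
  induction t with
  | var i => rfl
  | func g ts ih =>
    simp only [Term.realize_func, ih]
    exact IsCompatibleInf.funMap_inf _ g _ _

/-- The term operation of `t`, as a homomorphism of semilattices with a largest element. -/
def realizeInfTopHom [IsIdempotentAlgebra L M] [IsCompatibleInf L M] [OrderTop M]
    (t : L.Term α) : InfTopHom (α → M) M where
  toFun := t.realize
  map_inf' := realize_inf t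
  map_top' := realize_const t ⊤

/-- The binary operation `(x, y) ↦ f x ⊓ g y` is a term operation. -/
def IsMeetTerm (L : Language) {M : Type*} [L.Structure M] [SemilatticeInf M]
    (f g : M → M) : Prop :=
  ∃ t : L.Term (Fin 2), ∀ x y : M, t.realize ![x, y] = f x ⊓ g y

namespace IsMeetTerm

variable {f g : M → M}

theorem id_top [OrderTop M] : IsMeetTerm L (id : M → M) ⊤ :=
  ⟨Term.var 0, fun x _ => (inf_top_eq x).symm⟩

theorem swap (hfg : IsMeetTerm L f g) : IsMeetTerm L g f := by
  obtain ⟨t, ht⟩ := hfg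
  refine ⟨t.subst ![Term.var 1, Term.var 0], fun x y => ?_⟩
  rw [realize_subst_pair, ht, inf_comm]
  rfl

theorem infClosed_right : InfClosed {k : M → M | IsMeetTerm L id k} := by
  rintro k ⟨s, hs⟩ l ⟨t, ht⟩
  refine ⟨t.subst ![s, Term.var 1], fun x y => ?_⟩
  rw [realize_subst_pair, ht, hs]
  exact inf_assoc x (k y) (l y)

theorem exists_isLeast_right [Finite M] [OrderTop M] :
    ∃ h, IsLeast {k : M → M | IsMeetTerm L id k} h := by
  obtain ⟨h, hh⟩ := (Set.toFinite {k : M → M | IsMeetTerm L id k}).exists_minimal ⟨⊤, id_top⟩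
  exact ⟨h, infClosed_right.codirectedOn.minimal_iff_isLeast.1 hh⟩

variable [IsIdempotentAlgebra L M]

theorem inf_apply_self (hfg : IsMeetTerm L f g) (x : M) : f x ⊓ g x = x := by
  obtain ⟨t, ht⟩ := hfg
  have hconst : ![x, x] = fun _ => x := by
    ext i
    fin_cases i <;> rfl
  rw [← ht, hconst, realize_const]

theorem le_left (hfg : IsMeetTerm L f g) (x : M) : x ≤ f x :=
  (hfg.inf_apply_self x).ge.trans inf_le_left

theorem le_right (hfg : IsMeetTerm L f g) (x : M) : x ≤ g x :=
  hfg.swap.le_left x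

variable [IsCompatibleInf L M] [OrderTop M]

theorem map_inf_right (hfg : IsMeetTerm L f g) (x y : M) : g (x ⊓ y) = g x ⊓ g y := by
  have hf_top : f ⊤ = ⊤ := top_le_iff.1 (hfg.le_left ⊤)
  obtain ⟨t, ht⟩ := hfg
  have hg (z : M) : g z = t.realize ![⊤, z] := by rw [ht, hf_top, top_inf_eq]
  have hpair : ![⊤, x ⊓ y] = ![⊤, x] ⊓ ![⊤, y] := by
    ext i
    fin_cases i <;> simp
  rw [hg, hg, hg, hpair, realize_inf]

theorem monotone_right (hfg : IsMeetTerm L f g) : Monotone g :=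
  Monotone.of_map_inf hfg.map_inf_right

theorem comp_self_right (hfg : IsMeetTerm L f g) : IsMeetTerm L f (g ∘ g) := by
  have hfgf (x : M) : f x ≤ g (f x) := hfg.le_right (f x)
  have hg_inf := hfg.map_inf_right
  obtain ⟨t, ht⟩ := hfg
  refine ⟨t.subst ![Term.var 0, t], fun x y => ?_⟩
  calc (t.subst ![Term.var 0, t]).realize ![x, y]
      = f x ⊓ g (f x ⊓ g y) := by rw [realize_subst_pair, ht, ht]; rfl
    _ = f x ⊓ (g ∘ g) y := by
      rw [hg_inf, ← inf_assoc, inf_eq_left.2 (hfgf x), Function.comp_apply]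

theorem id_of_comp_self (hfg : IsMeetTerm L f g) (hf : f ∘ f = f) (hg : g ∘ g = g) :
    IsMeetTerm L id fun y => f (g y) ⊓ g (f y) := by
  have hf_inf := hfg.swap.map_inf_right
  have hg_inf := hfg.map_inf_right
  have hself := hfg.inf_apply_self
  obtain ⟨s, hs⟩ := hfg.swap
  obtain ⟨t, ht⟩ := hfg
  refine ⟨s.subst ![s, t], fun x y => ?_⟩
  calc (s.subst ![s, t]).realize ![x, y]
      = g (g x ⊓ f y) ⊓ f (f x ⊓ g y) := by rw [realize_subst_pair, hs, hs, ht]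
    _ = (g x ⊓ g (f y)) ⊓ (f x ⊓ f (g y)) := by
      rw [hg_inf, hf_inf, ← Function.comp_apply (f := g) (g := g), hg,
        ← Function.comp_apply (f := f) (g := f), hf]
    _ = (f x ⊓ g x) ⊓ (f (g y) ⊓ g (f y)) := by ac_rfl
    _ = id x ⊓ (f (g y) ⊓ g (f y)) := by rw [hself, id]

theorem exists_id_of_fixed [Finite M] (hfg : IsMeetTerm L f g) {u : M} (hf : f u = u)
    (hg : g u = u) : ∃ k, IsMeetTerm L id k ∧ k u = u := by
  let S : Set ((M → M) × (M → M)) := {p | IsMeetTerm L p.1 p.2 ∧ p.1 u = u ∧ p.2 u = u}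
  -- Squaring a component stays in `S` and goes up, so both components of a maximal pair are
  -- idempotent.
  obtain ⟨⟨p, q⟩, hmax⟩ := S.toFinite.exists_maximal ⟨(f, g), hfg, hf, hg⟩
  obtain ⟨hpq, hp : p u = u, hq : q u = u⟩ := hmax.prop
  have hpp_mem : (p ∘ p, q) ∈ S := ⟨hpq.swap.comp_self_right.swap, by simp [hp], hq⟩
  have hqq_mem : (p, q ∘ q) ∈ S := ⟨hpq.comp_self_right, hp, by simp [hq]⟩
  have hpp : p ∘ p = p :=
    (congrArg Prod.fst (hmax.eq_of_le hpp_mem ⟨fun x => hpq.le_left (p x), le_rfl⟩)).symm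
  have hqq : q ∘ q = q :=
    (congrArg Prod.snd (hmax.eq_of_le hqq_mem ⟨le_rfl, fun x => hpq.le_right (q x)⟩)).symm
  exact ⟨_, hpq.id_of_comp_self hpp hqq, by simp only [hp, hq, inf_idem]⟩

theorem coordMap_realize [DecidableEq α] (t : L.Term α) (i : α) :
    IsMeetTerm L (coordMap (realizeInfTopHom (M := M) t) i)
      (fun y => t.realize (Function.update (fun _ => y) i ⊤)) := by
  refine ⟨t.subst fun k => if k = i then Term.var 0 else Term.var 1, fun x y => ?_⟩
  change _ = t.realize (Function.update ⊤ i x) ⊓ t.realize (Function.update (fun _ => y) i ⊤)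
  rw [Term.realize_subst, ← realize_inf]
  congr 1
  ext k
  by_cases hk : k = i
  · subst hk
    simp
  · simp [hk]

end IsMeetTerm

variable [IsIdempotentAlgebra L M] [IsCompatibleInf L M] [OrderTop M] [Finite M]
  {h : M → M} {u : M}

theorem eq_of_coordMap_realize_eq_self [DecidableEq α]
    (hh : h ∈ lowerBounds {k | IsMeetTerm L id k}) (hu : u < h u) (t : L.Term α) {i j : α}
    (hi : coordMap (realizeInfTopHom t) i u = u) (hj : coordMap (realizeInfTopHom t) j u = u) :
    i = j := by
  by_contra hij
  have hle : (fun _ => u) ≤ Function.update (fun _ : α => u) i ⊤ :=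
    le_update_iff.2 ⟨le_top, fun _ _ => le_rfl⟩
  have hrest : t.realize (Function.update (fun _ => u) i ⊤) = u := by
    refine le_antisymm ?_
      ((realize_const t u).ge.trans (OrderHomClass.mono (realizeInfTopHom t) hle))
    have hle_coord := map_le_coordMap (realizeInfTopHom t) (Function.update (fun _ => u) i ⊤) j
    rwa [Function.update_of_ne (Ne.symm hij), hj] at hle_coord
  obtain ⟨k, hk, hku⟩ := (IsMeetTerm.coordMap_realize t i).exists_id_of_fixed hi hrest
  exact ((hh hk u).trans_eq hku).not_gt hu

theorem exists_isProjOn_pair [Finite α] (hh : h ∈ lowerBounds {k | IsMeetTerm L id k})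
    (hu : IsLeast (Set.Ioi u) (h u)) (t : L.Term α) :
    ∃ i, IsProjOn t.realize {u, h u} i := by
  classical
  obtain ⟨i, hi⟩ := exists_coordMap_eq_self (F := realizeInfTopHom t) (realize_const t) hu
  have hunique (j : α) (hji : j ≠ i) : coordMap (realizeInfTopHom t) j u ≠ u := fun hj =>
    hji (eq_of_coordMap_realize_eq_self hh hu.1 t hj hi)
  exact ⟨i, isProjOn_pair_of_coordMap (F := realizeInfTopHom t) (realize_const t) hu hi hunique⟩

end Term

/-- Lemma 3.6: a finite idempotent algebra with a compatible semilattice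
operation whose semilattice has a largest element and which has no 2-element essentially
unary subalgebra has ⊓ as a term operation. -/
theorem stmt_4 {L : Language} {M : Type*} [L.Structure M] [Fintype M] [Nonempty M]
    [SemilatticeInf M] [OrderTop M]
    (hidem : ∀ (n : ℕ) (g : L.Functions n) (a : M), funMap g (fun _ : Fin n => a) = a)
    (hcompat : ∀ (n : ℕ) (g : L.Functions n) (a b : Fin n → M),
      funMap g (fun i => a i ⊓ b i) = funMap g a ⊓ funMap g b)
    (hnounary : ∀ u v : M, u ≠ v →
      (∀ (n : ℕ) (g : L.Functions n) (x : Fin n → M),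
        (∀ j, x j ∈ ({u, v} : Set M)) → funMap g x ∈ ({u, v} : Set M)) →
      ∃ (n : ℕ) (t : L.Term (Fin n)), ∀ i : Fin n,
        ¬ (∀ x : Fin n → M, (∀ j, x j ∈ ({u, v} : Set M)) → t.realize x = x i)) :
    ∃ s : L.Term (Fin 2), ∀ x y : M, s.realize ![x, y] = x ⊓ y := by
  have : IsIdempotentAlgebra L M := ⟨hidem⟩
  have : IsCompatibleInf L M := ⟨hcompat⟩
  obtain ⟨h, hh⟩ := IsMeetTerm.exists_isLeast_right (L := L) (M := M)
  have hterm : IsMeetTerm L id h := hh.1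
  by_cases hid : h = id
  · subst hid
    exact hterm
  obtain ⟨u, hu⟩ := exists_isLeast_Ioi_apply hterm.monotone_right hterm.le_right hid
  have hproj (n : ℕ) (t : L.Term (Fin n)) : ∃ i, IsProjOn t.realize {u, h u} i :=
    exists_isProjOn_pair hh.2 hu t
  obtain ⟨n, t, ht⟩ := hnounary u (h u) hu.1.ne fun n g _ hx =>
    funMap_mem_of_forall_isProjOn (hproj n) g hx
  obtain ⟨i, hi⟩ := hproj n t
  exact absurd hi (ht i)
end

section
/- Let L be a first-order language and M a nonempty L-structure that is idempotent and carries a SemilatticeSup instance such that ⊔ is a compatible semilattice operation of M (funMap g (fun i => a i ⊔ b i) = funMap g a ⊔ funMap g b for every function symbol g) and ⊔ is a term operation of M (there is an L-term t : L.Term (Fin 2) with t.realize ![x, y] = x ⊔ y for all x, y). Assume M is subdirectly irreducible: there is a congruence μ of M with μ ≠ the equality relation such that μ ⊆ θ for every congruence θ of M other than equality. Then: (1) M has a least element 0 (0 ≤ x for all x); (2) there is an element u with 0 < u such that u ≤ x for every x ≠ 0; (3) μ relates x and y if and only if x = y or {x, y} = {0, u}. -/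
open FirstOrder Language Structure

/-!
For each `a`, idempotence and compatibility make the translation `x ↦ x ⊔ a` commute with all
operations, so its kernel is a congruence, and this kernel is nontrivial unless `a` is a least
element. Hence the monolith `μ` satisfies `x ⊔ a = y ⊔ a` whenever `μ x y` and `a` is not least.
Taking `a = x` and `a = y` shows that one member of each nontrivial `μ`-pair is a least element `z`;
taking `x = z` shows that the other lies below every `a ≠ z`, and is therefore unique.
-/

section Congruence

variable {L : Language} {M N : Type*} [L.Structure M] [L.Structure N]

variable (L) in
/-- A congruence of an `L`-structure: an equivalence relation preserved by all function symbols.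
Relation symbols play no role. -/
def IsCongruence (θ : Setoid M) : Prop :=
  ∀ (n : ℕ) (g : L.Functions n) (a b : Fin n → M),
    (∀ i, θ (a i) (b i)) → θ (funMap g a) (funMap g b)

variable (L) in
/-- The monolith of a subdirectly irreducible structure: its least congruence other than
equality. -/
def IsMonolith (μ : Setoid M) : Prop :=
  IsLeast {θ : Setoid M | IsCongruence L θ ∧ θ ≠ ⊥} μ

theorem isCongruence_ker {f : M → N}
    (hf : ∀ (n : ℕ) (g : L.Functions n) (a : Fin n → M), f (funMap g a) = funMap g (f ∘ a)) :
    IsCongruence L (Setoid.ker f) := by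
  intro n g a b hab
  have hcomp : f ∘ a = f ∘ b := funext hab
  rw [Setoid.ker_def, hf, hf, hcomp]

theorem isCongruence_ker_sup_right [SemilatticeSup M]
    (hidem : ∀ (n : ℕ) (g : L.Functions n) (a : M), funMap g (fun _ : Fin n => a) = a)
    (hcompat : ∀ (n : ℕ) (g : L.Functions n) (a b : Fin n → M),
      funMap g (fun i => a i ⊔ b i) = funMap g a ⊔ funMap g b) (a : M) :
    IsCongruence L (Setoid.ker (· ⊔ a)) :=
  isCongruence_ker fun n g b =>
    calc
      funMap g b ⊔ a = funMap g b ⊔ funMap g (fun _ => a) := by rw [hidem]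
      _ = funMap g (fun i => b i ⊔ a) := (hcompat n g b fun _ => a).symm

end Congruence

section SupTranslation

variable {M : Type*} [SemilatticeSup M] {μ : Setoid M}

theorem isBot_of_injective_sup_right {a : M} (ha : Function.Injective (· ⊔ a)) : IsBot a := by
  intro x
  have hx : x ⊔ a = x := ha (by simp only [sup_assoc, sup_idem])
  exact sup_eq_left.mp hx

/-- An equivalence relation is collapsed by joins if every translation `x ↦ x ⊔ a`, with `a` not a
least element, identifies all related elements. This is all that the order-theoretic part of the
argument needs to know about the monolith. -/
def CollapsedBySup (μ : Setoid M) : Prop :=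
  ∀ a : M, ¬IsBot a → μ ≤ Setoid.ker (· ⊔ a)

theorem IsMonolith.collapsedBySup {L : Language} [L.Structure M] (hμ : IsMonolith L μ)
    (hker : ∀ a : M, IsCongruence L (Setoid.ker (· ⊔ a))) : CollapsedBySup μ :=
  fun a ha => hμ.2 ⟨hker a, fun hbot =>
    ha (isBot_of_injective_sup_right (Setoid.injective_iff_ker_bot _ |>.mpr hbot))⟩

namespace CollapsedBySup

variable {x y z u v : M}

theorem isBot_or_isBot (hμ : CollapsedBySup μ) (hxy : μ x y) (hne : x ≠ y) :
    IsBot x ∨ IsBot y := by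
  by_contra! ⟨hx, hy⟩
  have hxx : x ⊔ x = y ⊔ x := hμ x hx hxy
  have hyy : x ⊔ y = y ⊔ y := hμ y hy hxy
  exact hne <| calc
    x = y ⊔ x := by rw [← hxx, sup_idem]
    _ = y := by rw [sup_comm, hyy, sup_idem]

theorem le_of_rel_isBot (hμ : CollapsedBySup μ) (hz : IsBot z) (hzu : μ z u) (hx : x ≠ z) :
    u ≤ x := by
  have hx_not_bot : ¬IsBot x := fun hbot => hx (le_antisymm (hbot z) (hz x))
  have hsup : z ⊔ x = u ⊔ x := hμ x hx_not_bot hzu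
  rwa [sup_eq_right.mpr (hz x), eq_comm, sup_eq_right] at hsup

theorem eq_of_rel_isBot (hμ : CollapsedBySup μ) (hz : IsBot z) (hzu : μ z u) (hu : u ≠ z)
    (hzv : μ z v) (hv : v ≠ z) : u = v :=
  le_antisymm (hμ.le_of_rel_isBot hz hzu hv) (hμ.le_of_rel_isBot hz hzv hu)

theorem exists_isBot_rel (hμ : CollapsedBySup μ) (hne : μ ≠ ⊥) :
    ∃ z u, IsBot z ∧ μ z u ∧ u ≠ z := by
  obtain ⟨x, y, hxy, hxy_ne⟩ : ∃ x y, μ x y ∧ x ≠ y := by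
    by_contra! h
    exact hne (eq_bot_iff.mpr fun {x y} => h x y)
  rcases hμ.isBot_or_isBot hxy hxy_ne with hx | hy
  · exact ⟨x, y, hx, hxy, hxy_ne.symm⟩
  · exact ⟨y, x, hy, μ.symm hxy, hxy_ne⟩

theorem rel_iff (hμ : CollapsedBySup μ) (hz : IsBot z) (hzu : μ z u) (hu : u ≠ z) :
    μ x y ↔ x = y ∨ ({x, y} : Set M) = {z, u} := by
  constructor
  · intro hxy
    refine or_iff_not_imp_left.mpr fun hne => ?_
    rcases hμ.isBot_or_isBot hxy hne with hx | hy
    · obtain rfl : x = z := le_antisymm (hx z) (hz x)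
      rw [hμ.eq_of_rel_isBot hz hxy (Ne.symm hne) hzu hu]
    · obtain rfl : y = z := le_antisymm (hy z) (hz y)
      rw [hμ.eq_of_rel_isBot hz (μ.symm hxy) hne hzu hu, Set.pair_comm]
  · rintro (rfl | hpair)
    · exact μ.refl x
    · rcases Set.pair_eq_pair_iff.mp hpair with ⟨rfl, rfl⟩ | ⟨rfl, rfl⟩
      · exact hzu
      · exact μ.symm hzu

end CollapsedBySup

end SupTranslation

theorem stmt_5_general {L : Language} {M : Type*} [L.Structure M] [SemilatticeSup M]
    (hidem : ∀ (n : ℕ) (g : L.Functions n) (a : M), funMap g (fun _ : Fin n => a) = a)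
    (hcompat : ∀ (n : ℕ) (g : L.Functions n) (a b : Fin n → M),
      funMap g (fun i => a i ⊔ b i) = funMap g a ⊔ funMap g b)
    {μ : Setoid M} (hμ : IsMonolith L μ) :
    ∃ z u : M, (∀ x : M, z ≤ x) ∧ z < u ∧ (∀ x : M, x ≠ z → u ≤ x) ∧
      (∀ x y : M, μ x y ↔ x = y ∨ ({x, y} : Set M) = {z, u}) := by
  have hcollapsed : CollapsedBySup μ :=
    hμ.collapsedBySup (isCongruence_ker_sup_right hidem hcompat)
  obtain ⟨z, u, hz, hzu, hu⟩ := hcollapsed.exists_isBot_rel hμ.1.2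
  exact ⟨z, u, hz, lt_of_le_of_ne' (hz u) hu, fun _ => hcollapsed.le_of_rel_isBot hz hzu,
    fun _ _ => hcollapsed.rel_iff hz hzu hu⟩

/-- Theorem 6.1 (1)–(3): the structure of idempotent subdirectly irreducible
algebras with a compatible join-semilattice term operation. -/
theorem stmt_5 {L : Language} {M : Type*} [L.Structure M] [Nonempty M] [SemilatticeSup M]
    (hidem : ∀ (n : ℕ) (g : L.Functions n) (a : M), funMap g (fun _ : Fin n => a) = a)
    (hcompat : ∀ (n : ℕ) (g : L.Functions n) (a b : Fin n → M),
      funMap g (fun i => a i ⊔ b i) = funMap g a ⊔ funMap g b)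
    (hterm : ∃ t : L.Term (Fin 2), ∀ x y : M, t.realize ![x, y] = x ⊔ y)
    (μ : M → M → Prop)
    (hμequiv : Equivalence μ)
    (hμcong : ∀ (n : ℕ) (g : L.Functions n) (a b : Fin n → M),
      (∀ i, μ (a i) (b i)) → μ (funMap g a) (funMap g b))
    (hμne : μ ≠ (· = ·))
    (hmono : ∀ θ : M → M → Prop, Equivalence θ →
      (∀ (n : ℕ) (g : L.Functions n) (a b : Fin n → M),
        (∀ i, θ (a i) (b i)) → θ (funMap g a) (funMap g b)) →
      θ ≠ (· = ·) → ∀ x y : M, μ x y → θ x y) :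
    ∃ z u : M, (∀ x : M, z ≤ x) ∧ z < u ∧ (∀ x : M, x ≠ z → u ≤ x) ∧
      (∀ x y : M, μ x y ↔ x = y ∨ ({x, y} : Set M) = {z, u}) :=
  stmt_5_general hidem hcompat (μ := ⟨μ, hμequiv⟩)
    ⟨⟨hμcong, fun hbot => hμne (Setoid.eq_iff_rel_eq.mp hbot)⟩, fun θ ⟨hθcong, hθne⟩ =>
      hmono θ θ.iseqv hθcong fun heq => hθne (Setoid.eq_iff_rel_eq.mpr heq)⟩
end

section
/- Let L be a first-order language and M an L-structure that is idempotent and carries a SemilatticeSup instance such that ⊔ is a compatible semilattice operation of M and ⊔ is a term operation of M (there is an L-term t : L.Term (Fin 2) with t.realize ![x, y] = x ⊔ y for all x, y). Let N be a substructure of M (a subset closed under all funMaps, with the induced L-structure). Then every congruence θ of N extends to M: there is a congruence Θ of M such that for all a, b ∈ N, Θ a b if and only if θ a b. -/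
open FirstOrder Language Structure

/-!
Generate `Θ` from `θ` by closing under reflexivity and the operations, and only then under
transitivity. Monotonicity and idempotency make each single step `x → y` nearly stay inside `N`:
joined with any `n ∈ N`, it is controlled by a pair `v θ w` of `N` with `n ≤ v ≤ x ⊔ n` and
`y ≤ w ⊔ (x ⊔ n)`. If `x ≤ n` this forces `v = n`, hence `y ≤ w ⊔ n` with `w ⊔ n` in the
`θ`-class of `n`. So `Θ` preserves the property of lying below some member of a given `θ`-class, and
for `a, b ∈ N` with `Θ a b` it follows that `a θ (a ⊔ b) θ b`.
-/

open Function Relation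

theorem reflTransGen_pi {ι : Type*} [Finite ι] {α : ι → Type*} {r : ∀ i, α i → α i → Prop}
    (hr : ∀ i x, r i x x) {a b : ∀ i, α i} (h : ∀ i, ReflTransGen (r i) (a i) (b i)) :
    ReflTransGen (fun x y : ∀ i, α i => ∀ i, r i (x i) (y i)) a b := by
  classical
  have := Fintype.ofFinite ι
  suffices ∀ s : Finset ι, ReflTransGen (fun x y : ∀ i, α i => ∀ i, r i (x i) (y i))
      a (s.piecewise b a) by
    simpa only [Finset.piecewise_univ] using this Finset.univ
  intro s
  induction s using Finset.induction_on with
  | empty => rw [Finset.piecewise_empty]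
  | insert i s hi ih =>
    have update_step (x y : α i) (hxy : r i x y) (j : ι) :
        r j (update (s.piecewise b a) i x j) (update (s.piecewise b a) i y j) := by
      obtain rfl | hj := eq_or_ne j i
      · simpa only [update_self] using hxy
      · simpa only [update_of_ne hj] using hr j _
    have update_chain : ReflTransGen (fun x y : ∀ i, α i => ∀ i, r i (x i) (y i))
        (update (s.piecewise b a) i (a i)) (update (s.piecewise b a) i (b i)) :=
      ReflTransGen.lift (update (s.piecewise b a) i) update_step _ _ (h i)
    have update_start : update (s.piecewise b a) i (a i) = s.piecewise b a := by
      rw [update_eq_self_iff, Finset.piecewise_eq_of_notMem _ _ _ hi]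
    rw [update_start] at update_chain
    rw [Finset.piecewise_insert]
    exact ih.trans update_chain

section CompatibleRelations

variable {L : Language} {M : Type*} [L.Structure M] {r : M → M → Prop}

variable (L) in
/-- The relation `r` is preserved by all basic operations; an equivalence relation with this
property is a congruence. -/
def IsCompatible (r : M → M → Prop) : Prop :=
  ∀ (n : ℕ) (g : L.Functions n) (a b : Fin n → M),
    (∀ i, r (a i) (b i)) → r (funMap g a) (funMap g b)

theorem IsCompatible.realize (hr : IsCompatible L r) {α : Type*} (t : L.Term α) {v w : α → M}
    (h : ∀ i, r (v i) (w i)) : r (t.realize v) (t.realize w) := by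
  induction t with
  | var i => exact h i
  | func g ts ih => exact hr _ g _ _ ih

theorem IsCompatible.reflTransGen (hrefl : ∀ x, r x x) (hr : IsCompatible L r) :
    IsCompatible L (ReflTransGen r) :=
  fun n g _ _ h => ReflTransGen.lift (funMap g) (hr n g) _ _ (reflTransGen_pi (fun _ => hrefl) h)

variable (L) in
/-- The least reflexive compatible relation containing `r`. For symmetric `r` it is the tolerance
generated by `r`, and its transitive closure is the congruence generated by `r`. -/
inductive CompatibleReflGen (r : M → M → Prop) : M → M → Prop
  | refl (x : M) : CompatibleReflGen r x x
  | of {x y : M} (h : r x y) : CompatibleReflGen r x y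
  | map {n : ℕ} (g : L.Functions n) {a b : Fin n → M}
      (h : ∀ i, CompatibleReflGen r (a i) (b i)) : CompatibleReflGen r (funMap g a) (funMap g b)

namespace CompatibleReflGen

theorem isCompatible : IsCompatible L (CompatibleReflGen L r) :=
  fun _ g _ _ h => .map g h

instance stdSymm [Std.Symm r] : Std.Symm (CompatibleReflGen L r) where
  symm x y h := by
    induction h with
    | refl x => exact .refl x
    | of h => exact .of (symm_of r h)
    | map g _ ih => exact .map g ih

theorem equivalence_reflTransGen [Std.Symm r] :
    Equivalence (ReflTransGen (CompatibleReflGen L r)) :=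
  ⟨fun _ => .refl, symm_of _, .trans⟩

theorem isCompatible_reflTransGen : IsCompatible L (ReflTransGen (CompatibleReflGen L r)) :=
  isCompatible.reflTransGen .refl

end CompatibleReflGen

end CompatibleRelations

section CompatibleSup

variable {L : Language} {M : Type*} [L.Structure M] [SemilatticeSup M]

variable (L M) in
/-- The join of `M` is a compatible semilattice operation: every basic operation is a homomorphism
of join-semilattices. -/
def IsCompatibleSup : Prop :=
  ∀ (n : ℕ) (g : L.Functions n) (a b : Fin n → M),
    funMap g (fun i => a i ⊔ b i) = funMap g a ⊔ funMap g b

theorem IsCompatibleSup.monotone_funMap (hM : IsCompatibleSup L M) {n : ℕ} (g : L.Functions n) :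
    Monotone (funMap g : (Fin n → M) → M) := fun a b hab => by
  rw [← sup_eq_right, ← hM]
  exact congrArg (funMap g) (sup_eq_right.2 hab)

end CompatibleSup

/-- `N` is idempotent: every singleton is closed under the basic operations. Relation symbols play
no role, so this is a property of the underlying algebra. -/
def IsIdempotentStructure (L : Language) (N : Type*) [L.Structure N] : Prop :=
  ∀ (n : ℕ) (g : L.Functions n) (a : N), funMap g (fun _ : Fin n => a) = a

section Extension

variable {L : Language} {M N : Type*} [L.Structure M] [L.Structure N] [SemilatticeSup M]
  [SemilatticeSup N] {f : N →[L] M} {θ : N → N → Prop}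

section Controlling

variable (hM : IsCompatibleSup L M) (hN : IsIdempotentStructure L N)
  (hf_sup : ∀ a b, f (a ⊔ b) = f a ⊔ f b) (hθ : IsCompatible L θ)
  (hθ_sup : ∀ a b c d, θ a b → θ c d → θ (a ⊔ c) (b ⊔ d))
include hM hN hf_sup hθ hθ_sup

theorem CompatibleReflGen.exists_rel_controlling (hθ_refl : ∀ a, θ a a)
    {x y : M} (h : CompatibleReflGen L (Relation.Map θ f f) x y) (n : N) :
    ∃ v w, θ v w ∧ f n ≤ f v ∧ f v ≤ x ⊔ f n ∧ y ≤ f w ⊔ (x ⊔ f n) := by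
  induction h with
  | refl x => exact ⟨n, n, hθ_refl n, le_rfl, le_sup_right, le_sup_left.trans le_sup_right⟩
  | of h =>
    obtain ⟨a, b, hab, rfl, rfl⟩ := h
    refine ⟨a ⊔ n, b ⊔ n, hθ_sup _ _ _ _ hab (hθ_refl n), ?_, (hf_sup a n).le, ?_⟩ <;>
      rw [hf_sup]
    exacts [le_sup_right, le_sup_left.trans le_sup_left]
  | @map k g a b _ ih =>
    choose v w hvw hnv hva hbw using ih
    have funMap_const : funMap g (fun _ => f n) = f n :=
      (f.map_fun g fun _ => n).symm.trans (congrArg f (hN k g n))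
    refine ⟨funMap g v, funMap g w, hθ k g v w hvw, ?_, ?_, ?_⟩
    · calc f n = funMap g (fun _ => f n) := funMap_const.symm
        _ ≤ funMap g (f ∘ v) := hM.monotone_funMap g hnv
        _ = f (funMap g v) := (f.map_fun g v).symm
    · calc f (funMap g v) = funMap g (f ∘ v) := f.map_fun g v
        _ ≤ funMap g (fun i => a i ⊔ f n) := hM.monotone_funMap g hva
        _ = funMap g a ⊔ f n := by rw [hM, funMap_const]
    · calc funMap g b ≤ funMap g (fun i => (f ∘ w) i ⊔ (a i ⊔ f n)) := hM.monotone_funMap g hbw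
        _ = f (funMap g w) ⊔ (funMap g a ⊔ f n) := by rw [hM, hM, funMap_const, f.map_fun]

theorem CompatibleReflGen.exists_rel_le (hf : Injective f) (hθ_refl : ∀ a, θ a a)
    {x y : M} (h : CompatibleReflGen L (Relation.Map θ f f) x y) {n : N} (hxn : x ≤ f n) :
    ∃ m, θ n m ∧ y ≤ f m := by
  obtain ⟨v, w, hvw, hnv, hvx, hyw⟩ :=
    h.exists_rel_controlling hM hN hf_sup hθ hθ_sup hθ_refl n
  rw [sup_eq_right.2 hxn] at hvx hyw
  obtain rfl : v = n := hf (hvx.antisymm hnv)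
  refine ⟨w ⊔ v, ?_, hyw.trans (hf_sup w v).ge⟩
  simpa only [sup_idem] using hθ_sup v w v v hvw (hθ_refl v)

theorem exists_rel_le_of_reflTransGen (hf : Injective f) (hθ_equiv : Equivalence θ)
    {x y : M} (h : ReflTransGen (CompatibleReflGen L (Relation.Map θ f f)) x y) {n : N}
    (hxn : x ≤ f n) : ∃ m, θ n m ∧ y ≤ f m := by
  induction h with
  | refl => exact ⟨n, hθ_equiv.refl n, hxn⟩
  | tail _ hyz ih =>
    obtain ⟨m, hnm, hym⟩ := ih
    obtain ⟨k, hmk, hzk⟩ := hyz.exists_rel_le hM hN hf_sup hθ hθ_sup hf hθ_equiv.refl hym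
    exact ⟨k, hθ_equiv.trans hnm hmk, hzk⟩

theorem rel_sup_of_reflTransGen (hf : Injective f) (hθ_equiv : Equivalence θ)
    {a b : N} (h : ReflTransGen (CompatibleReflGen L (Relation.Map θ f f)) (f a) (f b)) :
    θ a (a ⊔ b) := by
  obtain ⟨m, ham, hbm⟩ :=
    exists_rel_le_of_reflTransGen hM hN hf_sup hθ hθ_sup hf hθ_equiv h le_rfl
  have hmb : m ⊔ b = m := hf ((hf_sup m b).trans (sup_eq_left.2 hbm))
  have hab : θ (a ⊔ b) m := hmb ▸ hθ_sup a m b b ham (hθ_equiv.refl b)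
  exact hθ_equiv.trans ham (hθ_equiv.symm hab)

end Controlling

theorem stmt_6_general (hM : IsCompatibleSup L M) (hN : IsIdempotentStructure L N)
    (f : N →[L] M) (hf : Injective f) (hf_sup : ∀ a b, f (a ⊔ b) = f a ⊔ f b)
    (θ : N → N → Prop) (hθ_equiv : Equivalence θ) (hθ : IsCompatible L θ)
    (hθ_sup : ∀ a b c d, θ a b → θ c d → θ (a ⊔ c) (b ⊔ d)) :
    ∃ Θ : M → M → Prop, Equivalence Θ ∧ IsCompatible L Θ ∧ ∀ a b, Θ (f a) (f b) ↔ θ a b := by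
  have : Std.Symm θ := hθ_equiv.stdSymm
  refine ⟨ReflTransGen (CompatibleReflGen L (Relation.Map θ f f)),
    CompatibleReflGen.equivalence_reflTransGen, CompatibleReflGen.isCompatible_reflTransGen,
    fun a b => ⟨fun h => ?_, fun h => .single (.of ⟨a, b, h, rfl, rfl⟩)⟩⟩
  have left_rel : θ a (a ⊔ b) :=
    rel_sup_of_reflTransGen hM hN hf_sup hθ hθ_sup hf hθ_equiv h
  have right_rel : θ b (b ⊔ a) :=
    rel_sup_of_reflTransGen hM hN hf_sup hθ hθ_sup hf hθ_equiv (symm_of _ h)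
  exact hθ_equiv.trans left_rel (hθ_equiv.symm (sup_comm b a ▸ right_rel))

end Extension

section TermOperation

variable {L : Language} {M : Type*} [L.Structure M] [Max M] {t : L.Term (Fin 2)}

theorem sup_mem_of_realize_eq_sup (ht : ∀ x y : M, t.realize ![x, y] = x ⊔ y)
    (N : L.Substructure M) {x y : M} (hx : x ∈ N) (hy : y ∈ N) : x ⊔ y ∈ N :=
  ht x y ▸ t.realize_mem ![x, y] (Fin.forall_fin_two.2 ⟨hx, hy⟩)

theorem realize_eq_sup_of_injective {N : Type*} [L.Structure N] [Max N] {f : N →[L] M}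
    (hf : Injective f) (hf_sup : ∀ a b, f (a ⊔ b) = f a ⊔ f b)
    (ht : ∀ x y : M, t.realize ![x, y] = x ⊔ y) (a b : N) : t.realize ![a, b] = a ⊔ b := by
  have map_pair : f ∘ ![a, b] = ![f a, f b] := funext (Fin.forall_fin_two.2 ⟨rfl, rfl⟩)
  apply hf
  rw [← HomClass.realize_term, map_pair, ht, hf_sup]

theorem IsCompatible.sup {r : M → M → Prop} (hr : IsCompatible L r)
    (ht : ∀ x y : M, t.realize ![x, y] = x ⊔ y) (a b c d : M) (hab : r a b) (hcd : r c d) :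
    r (a ⊔ c) (b ⊔ d) := by
  rw [← ht, ← ht]
  exact hr.realize t (Fin.forall_fin_two.2 ⟨hab, hcd⟩)

end TermOperation

/-- Theorem 6.7: an idempotent algebra with a compatible semilattice term
operation has the congruence extension property. -/
theorem stmt_6 {L : Language} {M : Type*} [L.Structure M] [SemilatticeSup M]
    (hidem : ∀ (n : ℕ) (g : L.Functions n) (a : M), funMap g (fun _ : Fin n => a) = a)
    (hcompat : ∀ (n : ℕ) (g : L.Functions n) (a b : Fin n → M),
      funMap g (fun i => a i ⊔ b i) = funMap g a ⊔ funMap g b)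
    (hterm : ∃ t : L.Term (Fin 2), ∀ x y : M, t.realize ![x, y] = x ⊔ y)
    (N : L.Substructure M)
    (θ : N → N → Prop)
    (hθequiv : Equivalence θ)
    (hθcong : ∀ (n : ℕ) (g : L.Functions n) (a b : Fin n → N),
      (∀ i, θ (a i) (b i)) → θ (funMap g a) (funMap g b)) :
    ∃ Θ : M → M → Prop, Equivalence Θ ∧
      (∀ (n : ℕ) (g : L.Functions n) (a b : Fin n → M),
        (∀ i, Θ (a i) (b i)) → Θ (funMap g a) (funMap g b)) ∧
      (∀ a b : N, Θ (a : M) (b : M) ↔ θ a b) := by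
  obtain ⟨t, ht⟩ := hterm
  let : SemilatticeSup N := Subtype.semilatticeSup fun _ _ => sup_mem_of_realize_eq_sup ht N
  have ht_N : ∀ a b : N, t.realize ![a, b] = a ⊔ b :=
    realize_eq_sup_of_injective (f := N.subtype.toHom) N.subtype_injective (fun _ _ => rfl) ht
  exact stmt_6_general hcompat (fun n g a => Subtype.ext (hidem n g a)) N.subtype.toHom
    N.subtype_injective (fun _ _ => rfl) θ hθequiv hθcong (IsCompatible.sup hθcong ht_N)
end

section
/- Let M be a finite nonempty meet-semilattice, t : (Fin m → M) → M a ⊓-homomorphism, and i, j : Fin m. Assume that every least preimage has equal i-th and j-th coordinates: for every b : Fin m → M such that (for all c, t c = t b implies b k ≤ c k for all k), we have b i = b j. Then for every x : Fin m → M, t x = t (Function.update (Function.update x i (x i ⊓ x j)) j (x i ⊓ x j)). -/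
/-!
Each nonempty fibre of a meet-homomorphism on a well-founded meet-semilattice is closed under meets,
so it has a least element. Replacing coordinates `i` and `j` of `x` by their meet gives the greatest
point below `x` whose `i`-th and `j`-th coordinates agree. This point therefore lies between `x` and
the least element of the fibre through `x`, and monotonicity forces the values to be equal.
-/

open Function

theorem exists_isLeast_of_infClosed {α : Type*} [SemilatticeInf α] [WellFoundedLT α] {s : Set α}
    (hs : InfClosed s) (hne : s.Nonempty) : ∃ a, IsLeast s a := by
  obtain ⟨a, ha⟩ := exists_minimal_of_wellFoundedLT (· ∈ s) hne
  exact ⟨a, hs.codirectedOn.minimal_iff_isLeast.mp ha⟩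

theorem exists_isLeast_fiber {α β : Type*} [SemilatticeInf α] [WellFoundedLT α] [SemilatticeInf β]
    (f : InfHom α β) (a : α) : ∃ b, IsLeast (f ⁻¹' {f a}) b :=
  exists_isLeast_of_infClosed (infClosed_singleton.preimage f) ⟨a, rfl⟩

theorem isGreatest_update_update_inf {ι M : Type*} [DecidableEq ι] [SemilatticeInf M]
    (x : ι → M) (i j : ι) :
    IsGreatest {y | y ≤ x ∧ y i = y j} (update (update x i (x i ⊓ x j)) j (x i ⊓ x j)) := by
  refine ⟨⟨?_, ?_⟩, ?_⟩
  · have hupdate_x : update x i (x i ⊓ x j) ≤ x := update_le_self_iff.mpr inf_le_left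
    exact update_le_iff.mpr ⟨inf_le_right, fun k _ ↦ hupdate_x k⟩
  · by_cases hij : i = j <;> simp [hij]
  · rintro y ⟨hyx, hy⟩
    have hyi : y i ≤ x i ⊓ x j := le_inf (hyx i) (hy.trans_le (hyx j))
    have hy_update : y ≤ update x i (x i ⊓ x j) := le_update_iff.mpr ⟨hyi, fun k _ ↦ hyx k⟩
    exact le_update_iff.mpr ⟨hy.symm.trans_le hyi, fun k _ ↦ hy_update k⟩

theorem stmt_10_general {ι M N : Type*} [Finite ι] [DecidableEq ι] [SemilatticeInf M]
    [WellFoundedLT M] [SemilatticeInf N] (t : InfHom (ι → M) N) (i j : ι)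
    (hij : ∀ b, IsLeast (t ⁻¹' {t b}) b → b i = b j) (x : ι → M) :
    t x = t (update (update x i (x i ⊓ x j)) j (x i ⊓ x j)) := by
  have hmono : Monotone t := OrderHomClass.mono t
  obtain ⟨b, hb⟩ := exists_isLeast_fiber t x
  have hbx : t b = t x := hb.1
  have hb_coord : b i = b j := hij b (hbx ▸ hb)
  obtain ⟨⟨hyx, -⟩, hgreatest⟩ := isGreatest_update_update_inf x i j
  have hby := hgreatest ⟨hb.2 rfl, hb_coord⟩
  exact le_antisymm (hbx ▸ hmono hby) (hmono hyx)

/-- variable-collapsing step of Lemma 4.1: if two variables agree in all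
least preimages, both may be replaced by their meet without changing the value of `t`. -/
theorem stmt_10 {M : Type*} [SemilatticeInf M] [Fintype M] [Nonempty M] {m : ℕ}
    (t : (Fin m → M) → M)
    (ht : ∀ x y : Fin m → M, t (fun i => x i ⊓ y i) = t x ⊓ t y)
    (i j : Fin m)
    (hij : ∀ b : Fin m → M, (∀ c : Fin m → M, t c = t b → ∀ k, b k ≤ c k) → b i = b j)
    (x : Fin m → M) :
    t x = t (Function.update (Function.update x i (x i ⊓ x j)) j (x i ⊓ x j)) :=
  stmt_10_general ⟨t, ht⟩ i j (fun b hb ↦ hij b fun _ hc ↦ hb.2 hc) x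
end

section
/- Let M be a meet-semilattice, 1 ∈ M a maximal element, k a natural number, and t : M → (Fin k → M) → M a function satisfying t (u ⊓ v) (fun i => b i ⊓ b' i) = t u b ⊓ t v b' for all u, v ∈ M and b, b' : Fin k → M. If t u b = 1 and t v b' = 1, then t v b = 1 and t u b' = 1. -/
theorem inf_eq_iff_of_isMax_s12 {α : Type*} [SemilatticeInf α] {a b m : α} (hm : IsMax m) :
    a ⊓ b = m ↔ a = m ∧ b = m := by
  constructor
  · rintro rfl
    exact ⟨(hm.eq_of_le inf_le_left).symm, (hm.eq_of_le inf_le_right).symm⟩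
  · rintro ⟨rfl, rfl⟩
    exact inf_idem _

section BinaryInfHom

variable {α β γ : Type*} [SemilatticeInf α] [Min β]

theorem map₂_inf_map₂_swap [Min γ] {f : α → β → γ}
    (hf : ∀ u v b b', f (u ⊓ v) (b ⊓ b') = f u b ⊓ f v b') (u v : α) (b b' : β) :
    f v b ⊓ f u b' = f u b ⊓ f v b' :=
  calc
    f v b ⊓ f u b' = f (v ⊓ u) (b ⊓ b') := (hf v u b b').symm
    _ = f (u ⊓ v) (b ⊓ b') := by rw [inf_comm]
    _ = f u b ⊓ f v b' := hf u v b b'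

theorem stmt_12_general [SemilatticeInf γ] {m : γ} (hm : IsMax m) {f : α → β → γ}
    (hf : ∀ u v b b', f (u ⊓ v) (b ⊓ b') = f u b ⊓ f v b') (u v : α) (b b' : β) :
    f v b = m ∧ f u b' = m ↔ f u b = m ∧ f v b' = m := by
  rw [← inf_eq_iff_of_isMax_s12 hm, ← inf_eq_iff_of_isMax_s12 hm, map₂_inf_map₂_swap hf]

end BinaryInfHom

/-- key computation in Theorem 5.1: if some parameter tuple sends u to the
maximal element 1 and some tuple sends v to 1, then the tuples can be exchanged. -/
theorem stmt_12 {M : Type*} [SemilatticeInf M] (one : M)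
    (hone : ∀ u : M, one ≤ u → u = one)
    {k : ℕ} (t : M → (Fin k → M) → M)
    (ht : ∀ (u v : M) (b b' : Fin k → M),
      t (u ⊓ v) (fun i => b i ⊓ b' i) = t u b ⊓ t v b')
    (u v : M) (b b' : Fin k → M)
    (h1 : t u b = one) (h2 : t v b' = one) :
    t v b = one ∧ t u b' = one :=
  (stmt_12_general (fun w hw => (hone w hw).le) ht u v b b').2 ⟨h1, h2⟩
end

section
/- Let M be a meet-semilattice, 1 ∈ M a maximal element, P a type, k a natural number, and t : P → M → (Fin k → M) → M a family of functions such that for every p : P, t p (u ⊓ v) (fun i => b i ⊓ b' i) = t p u b ⊓ t p v b' for all u, v, b, b'. Assume the family separates points relative to 1: for all u ≠ v in M there exist p : P and b : Fin k → M with either (t p u b = 1 and t p v b ≠ 1) or (t p u b ≠ 1 and t p v b = 1). Then the map sending u ∈ M to the set {p : P | ∃ b, t p u b = 1} is injective; in particular, if P is finite then M has at most 2 ^ (Fintype.card P) elements. -/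
/-!
If `f (u, b) = one` and `f (v, b') = one`, then `f (u ⊓ v, b ⊓ b') = one`, and since `f` is monotone
and `one` is maximal, `f (v, b) = one` as well: coordinates of solutions can be exchanged, so the
solution set `f ⁻¹' {one}` is the product of its projections. Hence, if `u` and `v` occur in
solutions for the same members of the family, no parameter `b` can tell them apart.
-/

universe u v w x

open Cardinal Set

theorem injective_setOf_exists_mk_mem {α β ι : Type*} {S : ι → Set (α × β)}
    (hS : ∀ i, (Prod.fst '' S i) ×ˢ (Prod.snd '' S i) ⊆ S i)
    (hsep : ∀ u v, (∀ i b, (u, b) ∈ S i ↔ (v, b) ∈ S i) → u = v) :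
    Function.Injective fun u => {i | ∃ b, (u, b) ∈ S i} := by
  have mk_mem_of_subset {u v : α} (huv : {i | ∃ b, (u, b) ∈ S i} ⊆ {i | ∃ b, (v, b) ∈ S i})
      (i : ι) (b : β) (hub : (u, b) ∈ S i) : (v, b) ∈ S i := by
    obtain ⟨b', hvb'⟩ := huv ⟨b, hub⟩
    exact hS i ⟨⟨(v, b'), hvb', rfl⟩, ⟨(u, b), hub, rfl⟩⟩
  exact fun u v huv => hsep u v fun i b =>
    ⟨mk_mem_of_subset huv.subset i b, mk_mem_of_subset huv.superset i b⟩

theorem fst_image_prod_snd_image_subset_of_isUpperSet {α β : Type*} [Preorder α] [Preorder β]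
    {S : Set (α × β)} (hupper : IsUpperSet S) (hdir : DirectedOn (· ≥ ·) S) :
    (Prod.fst '' S) ×ˢ (Prod.snd '' S) ⊆ S := by
  intro x hx
  obtain ⟨y, hy, hyx⟩ :=
    DirectedOn.isCofinalFor_fst_image_prod_snd_image (α := αᵒᵈ) (β := βᵒᵈ) hdir hx
  exact hupper hyx hy

theorem fst_image_prod_snd_image_preimage_subset_of_isMax {M N L : Type*}
    [SemilatticeInf M] [SemilatticeInf N] [SemilatticeInf L]
    (f : InfHom (M × N) L) {one : L} (hone : IsMax one) :
    (Prod.fst '' (f ⁻¹' {one})) ×ˢ (Prod.snd '' (f ⁻¹' {one})) ⊆ f ⁻¹' {one} := by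
  have hupper : IsUpperSet {one} := hone.Ici_eq ▸ isUpperSet_Ici one
  exact fst_image_prod_snd_image_subset_of_isUpperSet
    (hupper.preimage (OrderHomClass.mono f)) (infClosed_singleton.preimage f).codirectedOn

theorem stmt_13_general {M : Type u} {N : Type v} {L : Type w} {P : Type x}
    [SemilatticeInf M] [SemilatticeInf N] [SemilatticeInf L]
    {one : L} (hone : IsMax one) (t : P → InfHom (M × N) L)
    (hsep : ∀ u v, u ≠ v → ∃ p b,
      (t p (u, b) = one ∧ t p (v, b) ≠ one) ∨ (t p (u, b) ≠ one ∧ t p (v, b) = one)) :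
    Function.Injective (fun u => {p | ∃ b, t p (u, b) = one}) ∧
      lift.{x} #M ≤ 2 ^ lift.{u} #P := by
  have eq_of_forall_iff (u v : M) (huv : ∀ p b, t p (u, b) = one ↔ t p (v, b) = one) : u = v := by
    by_contra hne
    obtain ⟨p, b, ⟨hu, hv⟩ | ⟨hu, hv⟩⟩ := hsep u v hne
    exacts [hv ((huv p b).mp hu), hu ((huv p b).mpr hv)]
  have hinj : Function.Injective fun u => {p | ∃ b, t p (u, b) = one} :=
    injective_setOf_exists_mk_mem
      (fun p => fst_image_prod_snd_image_preimage_subset_of_isMax (t p) hone) eq_of_forall_iff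
  exact ⟨hinj, by simpa only [mk_set, lift_two_power] using lift_mk_le_lift_mk_of_injective hinj⟩

/-- central argument of Theorem 5.1: the map u ↦ S_u = {p : some parameter
tuple sends u to 1} is injective; hence |M| ≤ 2^|P| when P is finite. -/
theorem stmt_13 {M : Type*} [SemilatticeInf M] (one : M)
    (hone : ∀ u : M, one ≤ u → u = one)
    (P : Type*) {k : ℕ} (t : P → M → (Fin k → M) → M)
    (ht : ∀ (p : P) (u v : M) (b b' : Fin k → M),
      t p (u ⊓ v) (fun i => b i ⊓ b' i) = t p u b ⊓ t p v b')
    (hsep : ∀ u v : M, u ≠ v → ∃ (p : P) (b : Fin k → M),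
      (t p u b = one ∧ t p v b ≠ one) ∨ (t p u b ≠ one ∧ t p v b = one)) :
    Function.Injective (fun u : M => {p : P | ∃ b : Fin k → M, t p u b = one}) ∧
      ∀ (hP : Fintype P), Nat.card M ≤ 2 ^ (@Fintype.card P hP) := by
  obtain ⟨hinj, hcard⟩ := stmt_13_general (fun u hu => (hone u hu).le)
    (fun p => ⟨fun x => t p x.1 x.2, fun x y => ht p x.1 y.1 x.2 y.2⟩) hsep
  exact ⟨hinj, fun hP => by
    simpa using! toNat_le_toNat hcard (power_lt_aleph0 natCast_lt_aleph0 (by simp))⟩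
end

section
/- Let M be a meet-semilattice and α, β : M → M be ⊓-endomorphisms (α (a ⊓ b) = α a ⊓ α b and β (a ⊓ b) = β a ⊓ β b) with α ∘ α = α, β ∘ β = β, and α x ⊓ β x = x for all x ∈ M. Then for all x, y ∈ M: α (α x ⊓ β y) ⊓ β (α y ⊓ β x) = x ⊓ (α (β y) ⊓ β (α y)). -/
/-! After `α` and `β` are distributed over the meets, the `x`-part of the left-hand side is
`α (α x) ⊓ β (β x)`, which has to be `x`. The reason is that a bound `α a ⊓ b ≤ a` survives a second
application of `α` when `b ≤ α b`, since then `α (α a) ⊓ b ≤ α (α a ⊓ b) ≤ α a`. This is applied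
to the bound `α x ⊓ β x ≤ x` first for `α` and then for `β`. -/

section InfEndomorphism

variable {M : Type*} [SemilatticeInf M]

theorem map_map_inf_le_of_map_inf_le (α : InfHom M M) {a b : M} (hb : b ≤ α b)
    (hab : α a ⊓ b ≤ a) : α (α a) ⊓ b ≤ a := by
  have h_le_map : α (α a) ⊓ b ≤ α a :=
    calc
      α (α a) ⊓ b ≤ α (α a) ⊓ α b := inf_le_inf_left _ hb
      _ = α (α a ⊓ b) := (map_inf α _ _).symm
      _ ≤ α a := OrderHomClass.mono α hab
  exact (le_inf h_le_map inf_le_right).trans hab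

theorem map_map_inf_map_map_eq_self (α β : InfHom M M) (h : ∀ x, α x ⊓ β x = x) (x : M) :
    α (α x) ⊓ β (β x) = x := by
  have le_α (a : M) : a ≤ α a := (h a).ge.trans inf_le_left
  have le_β (a : M) : a ≤ β a := (h a).ge.trans inf_le_right
  have hα : α (α x) ⊓ β x ≤ x := map_map_inf_le_of_map_inf_le α (le_α _) (h x).le
  have hβ : β (β x) ⊓ α (α x) ≤ x :=
    map_map_inf_le_of_map_inf_le β (le_β _) ((inf_comm _ _).trans_le hα)
  exact le_antisymm ((inf_comm _ _).trans_le hβ)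
    (le_inf ((le_α x).trans (le_α _)) ((le_β x).trans (le_β _)))

theorem stmt_16_general (α β : InfHom M M) (h : ∀ x, α x ⊓ β x = x) (x y : M) :
    α (α x ⊓ β y) ⊓ β (α y ⊓ β x) = x ⊓ (α (β y) ⊓ β (α y)) :=
  calc
    α (α x ⊓ β y) ⊓ β (α y ⊓ β x)
      = (α (α x) ⊓ α (β y)) ⊓ (β (β x) ⊓ β (α y)) := by
        rw [map_inf, map_inf, inf_comm (β (α y))]
    _ = (α (α x) ⊓ β (β x)) ⊓ (α (β y) ⊓ β (α y)) := inf_inf_inf_comm _ _ _ _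
    _ = x ⊓ (α (β y) ⊓ β (α y)) := by rw [map_map_inf_map_map_eq_self α β h]

end InfEndomorphism

/-- computation of s(x,y) = t''(t''(x,y), t''(y,x)) in Lemma 3.6. -/
theorem stmt_16 {M : Type*} [SemilatticeInf M] (α β : M → M)
    (hα : ∀ a b : M, α (a ⊓ b) = α a ⊓ α b)
    (hβ : ∀ a b : M, β (a ⊓ b) = β a ⊓ β b)
    (hα2 : α ∘ α = α) (hβ2 : β ∘ β = β)
    (h : ∀ x : M, α x ⊓ β x = x) :
    ∀ x y : M, α (α x ⊓ β y) ⊓ β (α y ⊓ β x) = x ⊓ (α (β y) ⊓ β (α y)) :=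
  stmt_16_general ⟨α, hα⟩ ⟨β, hβ⟩ h
end
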